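/- In the differential algebra Ω, the element x³ is central: x³ commutes with each of the generators x⁻¹, y, θ, dx, dy, dθ (and hence with every element of Ω). -/

import Mathlib

/-!
`Ω`: the differential algebra of the Z₃-graded quantum superspace, the unital
associative ℂ-algebra with generators `x`, `x⁻¹`, `y`, `θ`, `dx`, `dy`, `dθ`,
quotient of the free algebra by the two-sided ideal generated by the relations
`x·x⁻¹ = 1 = x⁻¹·x`;  `xy = q·yx`, `xθ = q·θx`, `yθ = q²·θy`, `y³ = 0`, `θ³ = 0`;
`x·dx = q·dx·x`, `x·dy = q²·dy·x`, `x·dθ = q·dθ·x + (q−1)·dx·θ`, `y·dy = dy·y`,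
`y·dx = q·dx·y + (1−q²)·dy·x`, `y·dθ = q·dθ·y + (1−q²)·dy·θ`, `θ·dx = q·dx·θ`,
`θ·dy = dy·θ`, `θ·dθ = q²·dθ·θ`;  `dx·dy = q²·dy·dx`, `dx·dθ = dθ·dx`,
`dy·dθ = dθ·dy`;  `(dx)³ = 0`, `(dy)³ = 0`.
-/

noncomputable section

inductive Gen : Type
  | x | xinv | y | th | dx | dy | dth

abbrev FA : Type := FreeAlgebra ℂ Gen

def Xf : FA := FreeAlgebra.ι ℂ Gen.x
def XIf : FA := FreeAlgebra.ι ℂ Gen.xinv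
def Yf : FA := FreeAlgebra.ι ℂ Gen.y
def Tf : FA := FreeAlgebra.ι ℂ Gen.th
def DXf : FA := FreeAlgebra.ι ℂ Gen.dx
def DYf : FA := FreeAlgebra.ι ℂ Gen.dy
def DTf : FA := FreeAlgebra.ι ℂ Gen.dth

/-- The defining relations of the differential algebra `Ω`. -/
inductive QRel (q : ℂ) : FA → FA → Prop
  | xxi : QRel q (Xf * XIf) 1
  | xix : QRel q (XIf * Xf) 1
  | xy : QRel q (Xf * Yf) (q • (Yf * Xf))
  | xth : QRel q (Xf * Tf) (q • (Tf * Xf))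
  | yth : QRel q (Yf * Tf) ((q ^ 2) • (Tf * Yf))
  | ycube : QRel q (Yf ^ 3) 0
  | thcube : QRel q (Tf ^ 3) 0
  | xdx : QRel q (Xf * DXf) (q • (DXf * Xf))
  | xdy : QRel q (Xf * DYf) ((q ^ 2) • (DYf * Xf))
  | xdth : QRel q (Xf * DTf) (q • (DTf * Xf) + (q - 1) • (DXf * Tf))
  | ydy : QRel q (Yf * DYf) (DYf * Yf)
  | ydx : QRel q (Yf * DXf) (q • (DXf * Yf) + (1 - q ^ 2) • (DYf * Xf))
  | ydth : QRel q (Yf * DTf) (q • (DTf * Yf) + (1 - q ^ 2) • (DYf * Tf))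
  | thdx : QRel q (Tf * DXf) (q • (DXf * Tf))
  | thdy : QRel q (Tf * DYf) (DYf * Tf)
  | thdth : QRel q (Tf * DTf) ((q ^ 2) • (DTf * Tf))
  | dxdy : QRel q (DXf * DYf) ((q ^ 2) • (DYf * DXf))
  | dxdth : QRel q (DXf * DTf) (DTf * DXf)
  | dydth : QRel q (DYf * DTf) (DTf * DYf)
  | dxcube : QRel q (DXf ^ 3) 0
  | dycube : QRel q (DYf ^ 3) 0

/-- The differential algebra `Ω` of the Z₃-graded quantum superspace. -/
abbrev Om (q : ℂ) : Type := RingQuot (QRel q)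

def Xg (q : ℂ) : Om q := RingQuot.mkAlgHom ℂ (QRel q) Xf
def XIg (q : ℂ) : Om q := RingQuot.mkAlgHom ℂ (QRel q) XIf
def Yg (q : ℂ) : Om q := RingQuot.mkAlgHom ℂ (QRel q) Yf
def Tg (q : ℂ) : Om q := RingQuot.mkAlgHom ℂ (QRel q) Tf
def DXg (q : ℂ) : Om q := RingQuot.mkAlgHom ℂ (QRel q) DXf
def DYg (q : ℂ) : Om q := RingQuot.mkAlgHom ℂ (QRel q) DYf
def DTg (q : ℂ) : Om q := RingQuot.mkAlgHom ℂ (QRel q) DTf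

/-!
All generators but `dθ` commute with `x` up to a cube root of unity, hence commute with `x³`.
For `dθ` the relation is inhomogeneous, `x a = q a x + e` with `a = dθ` and `e = (q - 1) dx θ`,
where `x e = q² e x`. As `q ≠ q²`, it can be diagonalised: `(q - q²) a x + e` commutes with `x` up
to the factor `q`. Hence `x³` commutes with this element and with `e`, so with `a x`, and
cancelling the unit `x` on the right shows that it commutes with `a`.
-/

/-- `q`-commutation of `x` and `a`, with the scalar `c` picked up as `x` moves to the right past
`a`; it packages monomial relations such as `xy = q yx` in `Ω`. -/
def QCommute {R A : Type*} [SMul R A] [Mul A] (c : R) (x a : A) : Prop :=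
  x * a = c • (a * x)

namespace QCommute

variable {R A : Type*} [CommSemiring R] [Semiring A] [Algebra R A] {c d : R} {x a b : A}

theorem mul_right (ha : QCommute c x a) (hb : QCommute d x b) : QCommute (c * d) x (a * b) :=
  calc x * (a * b) = c • (a * (x * b)) := by rw [← mul_assoc, ha, smul_mul_assoc, mul_assoc]
    _ = (c * d) • (a * b * x) := by rw [hb, mul_smul_comm, smul_smul, mul_assoc]

theorem smul_right (r : R) (h : QCommute c x a) : QCommute c x (r • a) :=
  calc x * r • a = r • c • (a * x) := by rw [mul_smul_comm, h]
    _ = c • (r • a * x) := by rw [smul_comm, smul_mul_assoc]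

theorem pow_left (h : QCommute c x a) (n : ℕ) : QCommute (c ^ n) (x ^ n) a := by
  induction n with
  | zero => simp [QCommute]
  | succ n ih =>
    calc x ^ (n + 1) * a = c • (x ^ n * a * x) := by
          rw [pow_succ, mul_assoc, h, mul_smul_comm, mul_assoc]
      _ = c ^ (n + 1) • (a * x ^ (n + 1)) := by
          rw [ih, smul_mul_assoc, smul_smul, ← pow_succ', mul_assoc, ← pow_succ]

theorem commute_pow {n : ℕ} (hc : c ^ n = 1) (h : QCommute c x a) : Commute (x ^ n) a :=
  (h.pow_left n).trans (by rw [hc, one_smul])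

end QCommute

theorem qCommute_smul_mul_add {R A : Type*} [CommRing R] [Ring A] [Algebra R A] {c d : R}
    {x a e : A} (ha : x * a = c • (a * x) + e) (he : QCommute d x e) :
    QCommute c x ((c - d) • (a * x) + e) :=
  calc x * ((c - d) • (a * x) + e) = (c - d) • (x * a * x) + x * e := by
        rw [mul_add, mul_smul_comm, mul_assoc]
    _ = (c - d) • ((c • (a * x) + e) * x) + d • (e * x) := by rw [ha, he]
    _ = c • (((c - d) • (a * x) + e) * x) := by
        simp only [add_mul, smul_mul_assoc]
        module

theorem commute_pow_of_mul_eq_smul_add {K A : Type*} [Field K] [Ring A] [Algebra K A] {c d : K}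
    {x a e : A} {n : ℕ} (hc : c ^ n = 1) (hd : d ^ n = 1) (hcd : c ≠ d) (hx : IsRightRegular x)
    (ha : x * a = c • (a * x) + e) (he : QCommute d x e) :
    Commute (x ^ n) a := by
  have hsum : Commute (x ^ n) ((c - d) • (a * x) + e) :=
    (qCommute_smul_mul_add ha he).commute_pow hc
  have hsmul : Commute (x ^ n) ((c - d) • (a * x)) := by
    simpa only [add_sub_cancel_right] using hsum.sub_right (he.commute_pow hd)
  have hax : Commute (x ^ n) (a * x) := (Commute.smul_right_iff₀ (sub_ne_zero.mpr hcd)).mp hsmul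
  refine hx ?_
  calc x ^ n * a * x = a * x * x ^ n := by rw [mul_assoc, hax.eq]
    _ = a * x ^ n * x := by rw [mul_assoc, mul_assoc, (Commute.self_pow x n).eq]

theorem commute_of_forall_commute_ι {R X A : Type*} [CommSemiring R] [Semiring A] [Algebra R A]
    {f : FreeAlgebra R X →ₐ[R] A} (hf : Function.Surjective f) {z : A}
    (hz : ∀ i, Commute z (f (FreeAlgebra.ι R i))) (a : A) : Commute z a := by
  obtain ⟨b, rfl⟩ := hf a
  induction b using FreeAlgebra.induction with
  | grade0 r => rw [AlgHom.commutes]; exact Algebra.commute_algebraMap_right r z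
  | grade1 i => exact hz i
  | mul b c hb hc => rw [map_mul]; exact hb.mul_right hc
  | add b c hb hc => rw [map_add]; exact hb.add_right hc

section Relations

variable (q : ℂ)

theorem Xg_mul_XIg : Xg q * XIg q = 1 := by
  simpa only [Xg, XIg, map_mul, map_one] using
    RingQuot.mkAlgHom_rel ℂ (QRel.xxi (q := q))

theorem XIg_mul_Xg : XIg q * Xg q = 1 := by
  simpa only [Xg, XIg, map_mul, map_one] using
    RingQuot.mkAlgHom_rel ℂ (QRel.xix (q := q))

theorem isUnit_Xg : IsUnit (Xg q) :=
  ⟨⟨Xg q, XIg q, Xg_mul_XIg q, XIg_mul_Xg q⟩, rfl⟩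

theorem qCommute_Xg_Yg : QCommute q (Xg q) (Yg q) := by
  simpa only [QCommute, Xg, Yg, map_mul, map_smul] using
    RingQuot.mkAlgHom_rel ℂ (QRel.xy (q := q))

theorem qCommute_Xg_Tg : QCommute q (Xg q) (Tg q) := by
  simpa only [QCommute, Xg, Tg, map_mul, map_smul] using
    RingQuot.mkAlgHom_rel ℂ (QRel.xth (q := q))

theorem qCommute_Xg_DXg : QCommute q (Xg q) (DXg q) := by
  simpa only [QCommute, Xg, DXg, map_mul, map_smul] using
    RingQuot.mkAlgHom_rel ℂ (QRel.xdx (q := q))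

theorem qCommute_Xg_DYg : QCommute (q ^ 2) (Xg q) (DYg q) := by
  simpa only [QCommute, Xg, DYg, map_mul, map_smul] using
    RingQuot.mkAlgHom_rel ℂ (QRel.xdy (q := q))

theorem Xg_mul_DTg :
    Xg q * DTg q = q • (DTg q * Xg q) + (q - 1) • (DXg q * Tg q) := by
  simpa only [Xg, DTg, DXg, Tg, map_mul, map_add, map_smul] using
    RingQuot.mkAlgHom_rel ℂ (QRel.xdth (q := q))

theorem qCommute_Xg_DXg_mul_Tg : QCommute (q ^ 2) (Xg q) (DXg q * Tg q) :=
  sq q ▸ (qCommute_Xg_DXg q).mul_right (qCommute_Xg_Tg q)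

end Relations

/-- In the differential algebra `Ω`, the element `x³` is central: it commutes
with each of the generators `x⁻¹`, `y`, `θ`, `dx`, `dy`, `dθ` (and hence with
every element of `Ω`). -/
theorem x_cubed_central_in_Omega (q : ℂ) (hq3 : q ^ 3 = 1) (hq1 : q ≠ 1) :
    (Xg q) ^ 3 * XIg q = XIg q * (Xg q) ^ 3 ∧
    (Xg q) ^ 3 * Yg q = Yg q * (Xg q) ^ 3 ∧
    (Xg q) ^ 3 * Tg q = Tg q * (Xg q) ^ 3 ∧
    (Xg q) ^ 3 * DXg q = DXg q * (Xg q) ^ 3 ∧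
    (Xg q) ^ 3 * DYg q = DYg q * (Xg q) ^ 3 ∧
    (Xg q) ^ 3 * DTg q = DTg q * (Xg q) ^ 3 ∧
    (∀ a : Om q, (Xg q) ^ 3 * a = a * (Xg q) ^ 3) := by
  have hq6 : (q ^ 2) ^ 3 = 1 := by rw [pow_right_comm, hq3, one_pow]
  have hq0 : q ≠ 0 := ne_zero_pow three_ne_zero (hq3 ▸ one_ne_zero)
  have hne : q ≠ q ^ 2 := fun h => hq1 (mul_left_cancel₀ hq0 (by rw [← sq, ← h, mul_one]))
  have cxi : Commute (Xg q ^ 3) (XIg q) :=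
    Commute.pow_left ((Xg_mul_XIg q).trans (XIg_mul_Xg q).symm) 3
  have cy := (qCommute_Xg_Yg q).commute_pow hq3
  have cth := (qCommute_Xg_Tg q).commute_pow hq3
  have cdx := (qCommute_Xg_DXg q).commute_pow hq3
  have cdy := (qCommute_Xg_DYg q).commute_pow hq6
  have cdth := commute_pow_of_mul_eq_smul_add hq3 hq6 hne (isUnit_Xg q).isRegular.right
    (Xg_mul_DTg q) ((qCommute_Xg_DXg_mul_Tg q).smul_right (q - 1))
  refine ⟨cxi, cy, cth, cdx, cdy, cdth,
    commute_of_forall_commute_ι (RingQuot.mkAlgHom_surjective ℂ (QRel q)) fun i => ?_⟩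
  cases i
  exacts [Commute.pow_self (Xg q) 3, cxi, cy, cth, cdx, cdy, cdth]
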